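/- Inverse acting on the down block: for every m with 1 ≤ m ≤ M, (B^m)^{−1} D^m = −1 δ_0, i.e. the matrix whose (i,j) entry is −1 if j = 0 and 0 otherwise. -/

import Mathlib

open Matrix

/-- A function on `Fin (M+1)` supported within distance one of an interior point `m` sums to its
values at `m - 1`, `m` and `m + 1`. -/
theorem Fin.sum_eq_three_of_tridiagonal {A : Type*} [AddCommMonoid A] {M : ℕ}
    {p m q : Fin (M+1)} (hp : p.val + 1 = m.val) (hq : q.val = m.val + 1) (S : Fin (M+1) → A)
    (hS : ∀ n : Fin (M+1), 1 < |(m.val : ℤ) - (n.val : ℤ)| → S n = 0) :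
    ∑ n, S n = S p + (S m + S q) := by
  have hpmq : p ∉ ({m, q} : Finset (Fin (M+1))) := by
    simp only [Finset.mem_insert, Finset.mem_singleton, Fin.ext_iff]
    omega
  have hmq : m ≠ q := by
    rw [Ne, Fin.ext_iff]
    omega
  rw [← Finset.sum_subset (Finset.subset_univ {p, m, q}), Finset.sum_insert hpmq,
    Finset.sum_pair hmq]
  intro n _ hn
  simp only [Finset.mem_insert, Finset.mem_singleton, Fin.ext_iff] at hn
  exact hS n (lt_abs.mpr (by omega))

/-- A function on `Fin (M+1)` supported within distance one of the last point sums to its values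
at `M - 1` and `M`. -/
theorem Fin.sum_eq_two_of_tridiagonal_last {A : Type*} [AddCommMonoid A] {M : ℕ}
    {p m : Fin (M+1)} (hp : p.val + 1 = m.val) (hm : m.val = M) (S : Fin (M+1) → A)
    (hS : ∀ n : Fin (M+1), 1 < |(m.val : ℤ) - (n.val : ℤ)| → S n = 0) :
    ∑ n, S n = S p + S m := by
  have hpm : p ≠ m := by
    rw [Ne, Fin.ext_iff]
    omega
  rw [← Finset.sum_subset (Finset.subset_univ {p, m}), Finset.sum_pair hpm]
  intro n _ hn
  simp only [Finset.mem_insert, Finset.mem_singleton, Fin.ext_iff] at hn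
  exact hS n (lt_abs.mpr (by omega))

/-- If the row sums of an invertible matrix `B` cancel the zeroth column of `D`, and `D` vanishes
outside that column, then `B⁻¹ * D` is minus the indicator of the zeroth column. -/
theorem Matrix.inv_mul_eq_neg_vecMulVec_of_row_sum {K : Type*} [CommRing K] {l : ℕ}
    {B D : Matrix (Fin (l+1)) (Fin (l+1)) K} (hB : IsUnit B)
    (hD : ∀ i j, j ≠ 0 → D i j = 0) (hsum : ∀ i, D i 0 + ∑ j, B i j = 0) :
    B⁻¹ * D = -(Matrix.vecMulVec (fun _ => (1 : K))
      (fun j => if j = (0 : Fin (l+1)) then (1 : K) else 0)) := by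
  have hDB : D = B * -(Matrix.vecMulVec (fun _ => (1 : K))
      (fun j => if j = (0 : Fin (l+1)) then (1 : K) else 0)) := by
    ext i j
    by_cases hj : j = 0
    · subst hj
      simpa [Matrix.mul_apply, Matrix.vecMulVec_apply] using eq_neg_of_add_eq_zero_left (hsum i)
    · simp [Matrix.mul_apply, Matrix.vecMulVec_apply, hj, hD i j hj]
  conv_lhs => rw [hDB]
  exact Matrix.nonsing_inv_mul_cancel_left B _ ((Matrix.isUnit_iff_isUnit_det B).mp hB)

theorem stmt_9
    (M l : ℕ) (hM : 1 ≤ M)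
    (Q : Matrix (Fin (M+1) × Fin (l+1)) (Fin (M+1) × Fin (l+1)) ℝ)
    (htri : ∀ (m n : Fin (M+1)) (i j : Fin (l+1)),
      1 < |(m.val : ℤ) - (n.val : ℤ)| → Q (m, i) (n, j) = 0)
    (hrow : ∀ s, ∑ t, Q s t = 0)
    (W U D : ℕ → Matrix (Fin (l+1)) (Fin (l+1)) ℝ)
    (hW : ∀ (m : ℕ) (hm : m ≤ M) (i j : Fin (l+1)),
      W m i j = Q (⟨m, by omega⟩, i) (⟨m, by omega⟩, j))
    (hU : ∀ (m : ℕ) (hm : m < M) (i j : Fin (l+1)),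
      U m i j = Q (⟨m, by omega⟩, i) (⟨m+1, by omega⟩, j))
    (hD : ∀ (m : ℕ) (hm1 : 1 ≤ m) (hm2 : m ≤ M) (i j : Fin (l+1)),
      D m i j = Q (⟨m, by omega⟩, i) (⟨m-1, by omega⟩, j))
    (hDES : ∀ (m : ℕ), 1 ≤ m → m ≤ M → ∀ (i j : Fin (l+1)), j ≠ 0 → D m i j = 0)
    (Ut : ℕ → Matrix (Fin (l+1)) (Fin (l+1)) ℝ)
    (hUt : ∀ (m : ℕ), m < M → ∀ (i j : Fin (l+1)),
      Ut m i j = if j = 0 then ∑ k, U m i k else 0)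
    (hUtM : Ut M = 0)
    (B : ℕ → Matrix (Fin (l+1)) (Fin (l+1)) ℝ)
    (hB : ∀ (m : ℕ), m ≤ M → B m = W m + Ut m)
    (hBinv : ∀ (m : ℕ), 1 ≤ m → m ≤ M → IsUnit (B m))
    (R : ℕ → Matrix (Fin (l+1)) (Fin (l+1)) ℝ)
    (hR : ∀ (m : ℕ), 1 ≤ m → m ≤ M → R m = -(U (m-1) * (B m)⁻¹)) :
    ∀ (m : ℕ) (hm1 : 1 ≤ m) (hm2 : m ≤ M),
      (B m)⁻¹ * D m
        = -(Matrix.vecMulVec (fun _ => (1:ℝ)) (fun j => if j = (0 : Fin (l+1)) then (1:ℝ) else 0)) := by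
  intro m hm1 hm2
  refine Matrix.inv_mul_eq_neg_vecMulVec_of_row_sum (hBinv m hm1 hm2) (hDES m hm1 hm2) ?_
  intro i
  have hrow_m := hrow (⟨m, by omega⟩, i)
  rw [Fintype.sum_prod_type] at hrow_m
  have hfar : ∀ n : Fin (M+1), 1 < |(m : ℤ) - (n.val : ℤ)| →
      ∑ j, Q (⟨m, by omega⟩, i) (n, j) = 0 :=
    fun n hn => Finset.sum_eq_zero fun j _ => htri _ n i j hn
  have hDsum : ∑ j, D m i j = D m i 0 :=
    Fintype.sum_eq_single 0 fun j hj => hDES m hm1 hm2 i j hj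
  rw [hB m hm2, ← hDsum]
  simp only [Matrix.add_apply, Finset.sum_add_distrib]
  rcases hm2.lt_or_eq with hlt | rfl
  · rw [Fin.sum_eq_three_of_tridiagonal (p := ⟨m-1, by omega⟩) (m := ⟨m, by omega⟩)
      (q := ⟨m+1, by omega⟩) (Nat.sub_add_cancel hm1) rfl _ hfar] at hrow_m
    simpa [hUt m hlt, hU m hlt, hW m hm2, hD m hm1 hm2] using hrow_m
  · rw [Fin.sum_eq_two_of_tridiagonal_last (p := ⟨m-1, by omega⟩) (m := ⟨m, by omega⟩)
      (Nat.sub_add_cancel hm1) rfl _ hfar] at hrow_m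
    simpa [hUtM, hW m hm2, hD m hm1 hm2] using hrow_m
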